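/- arXiv:1201.0240 — 2 statements merged into one kernel-verified Lean document; each statement's English description precedes it below -/
import Mathlib

section
/- Let k ≥ 2 and let a_1,…,a_k and b_1,…,b_{k−1} be real numbers satisfying the interlacing chain a_1 ≥ b_1 ≥ a_2 ≥ b_2 ≥ … ≥ b_{k−1} ≥ |a_k|. Then there exists a vector Y = (y_1,…,y_{2k−1}) ∈ ℝ^{2k−1} such that the skew-symmetric matrix A(b,Y) is SO(2k)-conjugate to the block-diagonal matrix diag(L(a_1),…,L(a_k)). -/
open Matrix Polynomial

/-- The `m × m` real matrix built from the `2 × 2` blocks `L (c 0), …, L (c (n-1))`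
(where `L a` has first row `(0, -a)` and second row `(a, 0)`) placed along the
diagonal, all remaining entries being `0`.  For `m = 2n` this is
`diag (L c₁, …, L cₙ)`; for `m = 2n+1` this is `diag (L c₁, …, L cₙ, 0)`. -/
def diagL (m n : ℕ) (c : Fin n → ℝ) : Matrix (Fin m) (Fin m) ℝ :=
  Matrix.of fun i j =>
    if h : i.val / 2 = j.val / 2 ∧ i.val / 2 < n then
      if i.val % 2 = 0 ∧ j.val % 2 = 1 then -c ⟨i.val / 2, h.2⟩
      else if i.val % 2 = 1 ∧ j.val % 2 = 0 then c ⟨i.val / 2, h.2⟩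
      else 0
    else 0

/-- `X` and `Y` are conjugate by a special orthogonal matrix:
there is `B` with `BᵀB = 1`, `det B = 1` and `B X B⁻¹ = Y`. -/
def SOConj {m : ℕ} (X Y : Matrix (Fin m) (Fin m) ℝ) : Prop :=
  ∃ B : Matrix (Fin m) (Fin m) ℝ, Bᵀ * B = 1 ∧ B.det = 1 ∧ B * X * B⁻¹ = Y

/-- The `2k × 2k` real skew-symmetric matrix `A(b, Y)` with top-left
`(2k-1) × (2k-1)` block `diag (L b₁, …, L b_{k-1}, 0)`, last column
`(y₁, …, y_{2k-1}, 0)ᵀ` and last row `(-y₁, …, -y_{2k-1}, 0)`. -/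
def Aeven (k : ℕ) (b : Fin (k-1) → ℝ) (Y : Fin (2*k-1) → ℝ) :
    Matrix (Fin (2*k)) (Fin (2*k)) ℝ :=
  Matrix.of fun i j =>
    if hi : i.val < 2*k-1 then
      if hj : j.val < 2*k-1 then diagL (2*k-1) (k-1) b ⟨i.val, hi⟩ ⟨j.val, hj⟩
      else Y ⟨i.val, hi⟩
    else if hj : j.val < 2*k-1 then -Y ⟨j.val, hj⟩ else 0

/-- Interlacing rank-one update: if `α` strictly interlaces `β`, some rank-one update of
`diagonal β` is orthogonally diagonalised to `diagonal α`. -/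
lemma exists_orthogonal_diagonalization_of_interlacing {n : ℕ} (α β : Fin n → ℝ)
    (hβα : ∀ i j, i ≤ j → β j < α i) (hαβ : ∀ i j, i < j → α j < β i) :
    ∃ (v : Fin n → ℝ) (P : Matrix (Fin n) (Fin n) ℝ), P * Pᵀ = 1 ∧
      P * (diagonal β + vecMulVec v v) = diagonal α * P := by
  have hβ : StrictAnti β := fun i j hij => (hβα j j le_rfl).trans (hαβ i j hij)
  have hα : StrictAnti α := fun i j hij => (hαβ i j hij).trans (hβα i i le_rfl)
  have hne : ∀ i j, α i - β j ≠ 0 := fun i j => sub_ne_zero.2 <| by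
    rcases le_or_gt i j with h | h
    · exact (hβα i j h).ne'
    · exact (hαβ j i h).ne
  set w : Fin n → ℝ := fun j =>
    Lagrange.nodalWeight Finset.univ β j * (-∏ i, (β j - α i)) with hw
  have hwpos : ∀ j, 0 < w j := by
    intro j
    have : w j = (α j - β j) *
        ∏ i ∈ Finset.univ.erase j, ((β j - β i)⁻¹ * (β j - α i)) := by
      simp only [hw, Lagrange.nodalWeight, Finset.prod_mul_distrib]
      rw [← Finset.mul_prod_erase Finset.univ (fun i => β j - α i) (Finset.mem_univ j)]
      ring
    rw [this]
    refine mul_pos (sub_pos.2 (hβα j j le_rfl)) (Finset.prod_pos fun i hi => ?_)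
    rcases lt_or_gt_of_ne (Finset.ne_of_mem_erase hi) with h | h
    · exact mul_pos_of_neg_of_neg (inv_lt_zero.2 (sub_neg.2 (hβ h)))
        (sub_neg.2 (hβα i j h.le))
    · exact mul_pos (inv_pos.2 (sub_pos.2 (hβ h))) (sub_pos.2 (hαβ j i h))
  have hsec : ∀ i, ∑ j, w j / (α i - β j) = 1 := by
    intro i
    set f : ℝ[X] := Lagrange.nodal Finset.univ β - Lagrange.nodal Finset.univ α with hf
    have hdeg : f.degree < (Finset.univ : Finset (Fin n)).card := by
      have := degree_sub_lt_left (p := Lagrange.nodal Finset.univ β)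
        (q := Lagrange.nodal Finset.univ α) (by simp [Lagrange.degree_nodal])
        (Lagrange.nodal_monic.ne_zero)
        (by rw [Lagrange.nodal_monic.leadingCoeff, Lagrange.nodal_monic.leadingCoeff])
      simpa [Lagrange.degree_nodal] using this
    have hinterp := Lagrange.eq_interpolate_of_eval_eq (fun j => -∏ i, (β j - α i))
      hβ.injective.injOn hdeg (fun j _ => by
        simp [hf, Lagrange.eval_nodal, Finset.prod_eq_zero (Finset.mem_univ j)])
    have hev := congrArg (eval (α i)) hinterp
    rw [Lagrange.eval_interpolate_not_at_node _ (fun j _ => sub_ne_zero.1 (hne i j))] at hev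
    have h0 : eval (α i) (Lagrange.nodal Finset.univ α) = 0 := by
      rw [Lagrange.eval_nodal]
      exact Finset.prod_eq_zero (Finset.mem_univ i) (sub_self _)
    have h1 : eval (α i) (Lagrange.nodal Finset.univ β) ≠ 0 := by
      rw [Lagrange.eval_nodal]
      exact Finset.prod_ne_zero_iff.2 fun j _ => hne i j
    rw [hf, eval_sub, h0, sub_zero] at hev
    refine Eq.trans (Finset.sum_congr rfl fun j _ => ?_)
      (mul_left_cancel₀ h1 ((mul_one _).trans hev)).symm
    simp only [hw]
    ring
  set v : Fin n → ℝ := fun j => √(w j)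
  have hv : ∀ j, v j * v j = w j := fun j => Real.mul_self_sqrt (hwpos j).le
  have hvpos : ∀ j, 0 < v j := fun j => Real.sqrt_pos.2 (hwpos j)
  set x : Fin n → Fin n → ℝ := fun i j => v j / (α i - β j) with hx
  have hNpos : ∀ i, 0 < ∑ j, x i j * x i j := fun i =>
    Finset.sum_pos (fun j _ => mul_self_pos.2 (div_ne_zero (hvpos j).ne' (hne i j)))
      ⟨i, Finset.mem_univ i⟩
  have horth : ∀ i l, i ≠ l → ∑ j, x i j * x l j = 0 := by
    intro i l hil
    have : (α l - α i) * ∑ j, x i j * x l j = 0 := by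
      rw [Finset.mul_sum]
      trans ∑ j, (w j / (α i - β j) - w j / (α l - β j))
      · refine Finset.sum_congr rfl fun j _ => ?_
        have := hne i j
        have := hne l j
        simp only [hx, ← hv]
        field_simp
        ring
      · rw [Finset.sum_sub_distrib, hsec, hsec, sub_self]
    exact (mul_eq_zero.1 this).resolve_left (sub_ne_zero.2 (hα.injective.ne hil.symm))
  refine ⟨v, Matrix.of fun i j => (√(∑ j, x i j * x i j))⁻¹ * x i j, ?_, ?_⟩
  · ext i l
    have : ∀ j, ((√(∑ j, x i j * x i j))⁻¹ * x i j) * ((√(∑ j, x l j * x l j))⁻¹ * x l j)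
        = ((√(∑ j, x i j * x i j))⁻¹ * (√(∑ j, x l j * x l j))⁻¹) * (x i j * x l j) :=
      fun j => by ring
    simp only [mul_apply, transpose_apply, of_apply, this, ← Finset.mul_sum]
    rcases eq_or_ne i l with rfl | h
    · rw [one_apply_eq, ← mul_inv, Real.mul_self_sqrt (hNpos i).le,
        inv_mul_cancel₀ (hNpos i).ne']
    · rw [one_apply_ne h, horth i l h, mul_zero]
  · ext i l
    rw [mul_add, Matrix.add_apply, mul_diagonal, diagonal_mul]
    have h1 : ∑ j, x i j * v j = 1 := by
      rw [← hsec i]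
      exact Finset.sum_congr rfl fun j _ => by simp only [hx, ← hv]; ring
    have h2 : v l = x i l * (α i - β l) := by simp only [hx]; field_simp [hne i l]
    simp only [mul_apply, of_apply, vecMulVec_apply]
    have h3 : ∑ j, (√(∑ j, x i j * x i j))⁻¹ * x i j * (v j * v l)
        = (√(∑ j, x i j * x i j))⁻¹ * v l * ∑ j, x i j * v j := by
      rw [Finset.mul_sum]; exact Finset.sum_congr rfl fun j _ => by ring
    rw [h3, h1]
    linear_combination (√(∑ j, x i j * x i j))⁻¹ * h2

/-- The splitting of `Fin (2 * k)` into its even and its odd elements. -/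
def evenOddEquiv (k : ℕ) : Fin k ⊕ Fin k ≃ Fin (2 * k) where
  toFun := Sum.elim (fun i => ⟨2 * i, by omega⟩) (fun i => ⟨2 * i + 1, by omega⟩)
  invFun i := if i.val % 2 = 0 then .inl ⟨i / 2, by omega⟩ else .inr ⟨i / 2, by omega⟩
  left_inv := by
    rintro (i | i)
    · simp
    · have : (2 * i.val + 1) / 2 = i := by omega
      simp [Nat.add_mod, this]
  right_inv i := by
    by_cases h : i.val % 2 = 0 <;> ext <;> simp [h] <;> omega

lemma diagL_submatrix_evenOddEquiv (k : ℕ) (a : Fin k → ℝ) :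
    (diagL (2 * k) k a).submatrix (evenOddEquiv k) (evenOddEquiv k) =
      fromBlocks 0 (-diagonal a) (diagonal a) 0 := by
  have h1 (i : ℕ) : (2 * i + 1) / 2 = i := by omega
  ext (i | i) (j | j) <;>
    simp [diagL, evenOddEquiv, diagonal_apply, h1, Fin.ext_iff, Nat.add_mod]

/-- The bipartite form of `Aeven k b Y` when `Y` is supported on even positions. -/
lemma Aeven_submatrix_evenOddEquiv (k : ℕ) (hk : 2 ≤ k) (b : Fin (k - 1) → ℝ) (v : Fin k → ℝ) :
    (Aeven k b fun i => if i.val % 2 = 0 then -v ⟨i / 2, by omega⟩ else 0).submatrix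
        (evenOddEquiv k) (evenOddEquiv k) =
      fromBlocks 0
        (-(diagonal (fun i : Fin k => if h : i.val < k - 1 then b ⟨i, h⟩ else 0) +
          vecMulVec v (Pi.single ⟨k - 1, Nat.sub_one_lt (by omega)⟩ 1)))
        (diagonal (fun i : Fin k => if h : i.val < k - 1 then b ⟨i, h⟩ else 0) +
          vecMulVec v (Pi.single ⟨k - 1, Nat.sub_one_lt (by omega)⟩ 1))ᵀ 0 := by
  have h1 (i : ℕ) : (2 * i + 1) / 2 = i := by omega
  have h2 (i : ℕ) : (2 * i + 1) % 2 = 1 := by omega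
  ext (i | i) (j | j)
  · have hi : 2 * i.val < 2 * k - 1 := by omega
    have hj : 2 * j.val < 2 * k - 1 := by omega
    simp [Aeven, diagL, evenOddEquiv, hi, hj]
  · have hi : 2 * i.val < 2 * k - 1 := by omega
    have e1 : (2 * j.val + 1 < 2 * k - 1) = (j.val < k - 1) := by simp; omega
    have e2 : (j = ⟨k - 1, Nat.sub_one_lt (by omega)⟩) = ¬ (j.val < k - 1) := by
      simp [Fin.ext_iff]; omega
    by_cases hj : j.val < k - 1
    · by_cases hij : i = j
      · subst hij
        simp [Aeven, diagL, evenOddEquiv, hi, h1, h2, e1, e2, hj, vecMulVec_apply]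
      · have := Fin.val_ne_of_ne hij
        simp [Aeven, diagL, evenOddEquiv, hi, h1, e1, e2, hj, vecMulVec_apply, hij, this]
    · by_cases hij : i = j
      · subst hij
        simp [Aeven, evenOddEquiv, hi, e1, e2, hj, vecMulVec_apply, Pi.single_apply]
      · simp [Aeven, evenOddEquiv, hi, e1, e2, hj, vecMulVec_apply, Pi.single_apply, hij]
  · have hi : 2 * j.val < 2 * k - 1 := by omega
    have e1 : (2 * i.val + 1 < 2 * k - 1) = (i.val < k - 1) := by simp; omega
    have e2 : (i = ⟨k - 1, Nat.sub_one_lt (by omega)⟩) = ¬ (i.val < k - 1) := by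
      simp [Fin.ext_iff]; omega
    by_cases hj : i.val < k - 1
    · by_cases hij : j = i
      · subst hij
        simp [Aeven, diagL, evenOddEquiv, hi, h1, h2, e1, e2, hj, vecMulVec_apply]
      · have := Fin.val_ne_of_ne (Ne.symm hij)
        simp [Aeven, diagL, evenOddEquiv, hi, h1, e1, e2, hj, vecMulVec_apply,
          diagonal_apply_ne' _ hij, this]
    · by_cases hij : j = i
      · subst hij
        simp [Aeven, evenOddEquiv, hi, e1, e2, hj, vecMulVec_apply, Pi.single_apply]
      · simp [Aeven, evenOddEquiv, hi, e1, e2, hj, vecMulVec_apply, Pi.single_apply,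
          diagonal_apply_ne' _ hij]
  · by_cases hi : 2 * i.val + 1 < 2 * k - 1 <;> by_cases hj : 2 * j.val + 1 < 2 * k - 1 <;>
      simp [Aeven, diagL, evenOddEquiv, hi, hj, h1, h2]

lemma exists_orthogonal_conj_of_strict (k : ℕ) (hk : 2 ≤ k) (a : Fin k → ℝ)
    (b : Fin (k - 1) → ℝ) (ha : ∀ i, a i ≠ 0) (hb : ∀ i, 0 ≤ b i)
    (hba : ∀ (i : Fin k) (j : Fin (k - 1)), i.val ≤ j.val → b j < |a i|)
    (hab : ∀ (i : Fin (k - 1)) (j : Fin k), i.val < j.val → |a j| < b i) :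
    ∃ (Y : Fin (2 * k - 1) → ℝ) (B : Matrix (Fin (2 * k)) (Fin (2 * k)) ℝ),
      Bᵀ * B = 1 ∧ B * Aeven k b Y * Bᵀ = diagL (2 * k) k a := by
  set c : Fin k → ℝ := fun i => if h : i.val < k - 1 then b ⟨i, h⟩ else 0 with hc
  obtain ⟨v, P, hP, hPM⟩ := exists_orthogonal_diagonalization_of_interlacing
    (fun i => a i ^ 2) (fun i => c i ^ 2)
    (fun i j hij => by
      by_cases hj : j.val < k - 1
      · simp only [hc, hj, dite_true]
        exact sq_lt_sq.2 (by rw [abs_of_nonneg (hb _)]; exact hba i ⟨j, hj⟩ hij)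
      · simpa [hc, hj] using pow_pos (abs_pos.2 (ha i)) 2)
    (fun i j hij => by
      have hi : i.val < k - 1 := by have := Fin.lt_def.1 hij; omega
      simp only [hc, hi, dite_true]
      exact sq_lt_sq.2 (by rw [abs_of_nonneg (hb _)]; exact hab ⟨i, hi⟩ j hij))
  set M : Matrix (Fin k) (Fin k) ℝ :=
    diagonal c + vecMulVec v (Pi.single ⟨k - 1, Nat.sub_one_lt (by omega)⟩ 1) with hM
  have hMM : M * Mᵀ = diagonal (fun i => c i ^ 2) + vecMulVec v v := by
    have h0 : c ⟨k - 1, Nat.sub_one_lt (by omega)⟩ = 0 := by simp [hc]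
    ext i l
    simp only [hM, mul_apply, transpose_apply, Matrix.add_apply, vecMulVec_apply,
      diagonal_apply, Pi.single_apply, add_mul, mul_add, Finset.sum_add_distrib]
    rcases eq_or_ne i l with rfl | h
    · by_cases h : i = ⟨k - 1, Nat.sub_one_lt (by omega)⟩
      · simp [h, h0]
      · simp [h, sq]
    · by_cases hi : i = ⟨k - 1, Nat.sub_one_lt (by omega)⟩ <;>
        by_cases hl : l = ⟨k - 1, Nat.sub_one_lt (by omega)⟩ <;>
        simp [h, hi, hl, h0]
  set D : Matrix (Fin k) (Fin k) ℝ := diagonal a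
  set D' : Matrix (Fin k) (Fin k) ℝ := diagonal a⁻¹
  have hDD : D' * D = 1 := by
    simp [D, D', diagonal_mul_diagonal, ha]
  have hDD' : D * D' = 1 := mul_eq_one_comm.1 hDD
  have hD2 : diagonal (fun i => a i ^ 2) = D * D := by
    simp [D, diagonal_mul_diagonal, sq]
  set Q := D' * P * M with hQdef
  have hDt : Dᵀ = D := diagonal_transpose _
  have hDt' : D'ᵀ = D' := diagonal_transpose _
  have hPMt : P * M * Mᵀ * Pᵀ = D * D := by
    rw [Matrix.mul_assoc P, hMM, hPM, Matrix.mul_assoc, hP, Matrix.mul_one, hD2]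
  have hQ : Q * Qᵀ = 1 := by
    calc Q * Qᵀ = D' * (P * M * Mᵀ * Pᵀ) * D' := by
          simp only [hQdef, transpose_mul, hDt', Matrix.mul_assoc]
      _ = (D' * D) * (D * D') := by rw [hPMt]; simp only [Matrix.mul_assoc]
      _ = 1 := by rw [hDD, hDD', Matrix.mul_one]
  have hPMQ : P * M * Qᵀ = D := by
    calc P * M * Qᵀ = (P * M * Mᵀ * Pᵀ) * D' := by
          simp only [hQdef, transpose_mul, hDt', Matrix.mul_assoc]
      _ = D * (D * D') := by rw [hPMt, Matrix.mul_assoc]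
      _ = D := by rw [hDD', Matrix.mul_one]
  have hQMP : Q * Mᵀ * Pᵀ = D := by
    rw [← hDt, ← hPMQ]
    simp only [transpose_mul, transpose_transpose, Matrix.mul_assoc]
  set e := evenOddEquiv k
  refine ⟨fun i => if i.val % 2 = 0 then -v ⟨i / 2, by omega⟩ else 0,
    (fromBlocks P 0 0 Q).submatrix e.symm e.symm, ?_, ?_⟩
  · rw [mul_eq_one_comm, transpose_submatrix, submatrix_mul_equiv, fromBlocks_transpose,
      fromBlocks_multiply]
    simp [hP, hQ]
  · have hA := Aeven_submatrix_evenOddEquiv k hk b v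
    rw [← hc] at hA
    rw [← submatrix_id_id (Aeven k b _), ← e.self_comp_symm, ← submatrix_submatrix, hA, ← hM,
      transpose_submatrix, submatrix_mul_equiv, submatrix_mul_equiv, fromBlocks_transpose,
      fromBlocks_multiply, fromBlocks_multiply]
    rw [← submatrix_id_id (diagL _ _ _), ← e.self_comp_symm, ← submatrix_submatrix,
      diagL_submatrix_evenOddEquiv]
    simp [hPMQ, hQMP, D]

lemma isCompact_orthogonal (m : ℕ) :
    IsCompact {B : Matrix (Fin m) (Fin m) ℝ | Bᵀ * B = 1} := by
  have hbox : IsCompact (Set.univ.pi fun _ => Set.univ.pi fun _ => Set.Icc (-1) 1 :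
      Set (Fin m → Fin m → ℝ)) :=
    isCompact_univ_pi fun _ => isCompact_univ_pi fun _ => isCompact_Icc
  refine hbox.of_isClosed_subset
    (isClosed_eq (f := fun B : Matrix (Fin m) (Fin m) ℝ => Bᵀ * B) (by fun_prop)
      continuous_const) ?_
  intro (B : Matrix (Fin m) (Fin m) ℝ) hB i _ j _
  have hU : B ∈ Matrix.unitaryGroup (Fin m) ℝ := by
    rw [mem_unitaryGroup_iff', star_eq_conjTranspose, conjTranspose_eq_transpose_of_trivial]
    exact hB
  simpa [abs_le] using entry_norm_bound_of_unitary hU i j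

/-- An orthogonal conjugation of `Aeven k b Y` can be made special by passing to `-Y`. -/
lemma exists_SOConj_of_orthogonal_conj {k : ℕ} (hk : 2 ≤ k) {b : Fin (k - 1) → ℝ}
    {Y : Fin (2 * k - 1) → ℝ} {B C : Matrix (Fin (2 * k)) (Fin (2 * k)) ℝ}
    (hB : Bᵀ * B = 1) (hC : B * Aeven k b Y * Bᵀ = C) :
    ∃ Y, SOConj (Aeven k b Y) C := by
  have hdet : B.det = 1 ∨ B.det = -1 := by
    have := congrArg det hB
    rw [det_mul, det_transpose, det_one] at this
    exact mul_self_eq_one_iff.1 this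
  rcases hdet with h | h
  · exact ⟨Y, B, hB, h, by rw [inv_eq_left_inv hB, hC]⟩
  · set last : Fin (2 * k) := ⟨2 * k - 1, by omega⟩
    set s : Fin (2 * k) → ℝ := fun i => if i = last then -1 else 1 with hs
    have hss : diagonal s * diagonal s = 1 := by
      rw [diagonal_mul_diagonal, ← diagonal_one]
      congr 1
      ext i
      by_cases hi : i = last <;> simp [hs, hi]
    have hsA : diagonal s * Aeven k b (-Y) * diagonal s = Aeven k b Y := by
      have hs' (i : Fin (2 * k)) : s i = if i.val < 2 * k - 1 then 1 else -1 := by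
        have : i = last ↔ ¬ i.val < 2 * k - 1 := by simp [last, Fin.ext_iff]; omega
        simp only [hs, this, ite_not]
      ext i j
      rw [mul_diagonal, diagonal_mul]
      by_cases hi : i.val < 2 * k - 1 <;> by_cases hj : j.val < 2 * k - 1 <;>
        simp [Aeven, hs', hi, hj]
    have horth : (B * diagonal s)ᵀ * (B * diagonal s) = 1 := by
      rw [transpose_mul, diagonal_transpose, Matrix.mul_assoc, ← Matrix.mul_assoc Bᵀ, hB,
        Matrix.one_mul, hss]
    refine ⟨-Y, B * diagonal s, horth, ?_, ?_⟩
    · simp [det_mul, h, hs, det_diagonal, Finset.prod_ite_eq']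
    · rw [inv_eq_left_inv horth, transpose_mul, diagonal_transpose, ← hC, ← hsA]
      simp only [Matrix.mul_assoc]

lemma continuous_diagL {X : Type*} [TopologicalSpace X] (m n : ℕ) {c : X → Fin n → ℝ}
    (hc : Continuous c) : Continuous fun x => diagL m n (c x) := by
  refine continuous_matrix fun i j => ?_
  simp only [diagL, of_apply]
  split_ifs <;> fun_prop

lemma continuous_Aeven {X : Type*} [TopologicalSpace X] (k : ℕ) {b : X → Fin (k - 1) → ℝ}
    {Y : X → Fin (2 * k - 1) → ℝ} (hb : Continuous b) (hY : Continuous Y) :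
    Continuous fun x => Aeven k (b x) (Y x) := by
  refine continuous_matrix fun i j => ?_
  simp only [Aeven, of_apply]
  split_ifs
  · exact (continuous_diagL _ _ hb).matrix_elem _ _
  all_goals fun_prop

/-- The pairs `(a, b)` for which the conclusion holds up to orthogonal conjugacy form a closed
set, since the orthogonal group is compact. -/
lemma isClosed_setOf_orthogonal_conj (k : ℕ) (hk : 2 ≤ k) :
    IsClosed {p : (Fin k → ℝ) × (Fin (k - 1) → ℝ) |
      ∃ (Y : Fin (2 * k - 1) → ℝ) (B : Matrix (Fin (2 * k)) (Fin (2 * k)) ℝ),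
        Bᵀ * B = 1 ∧ B * Aeven k p.2 Y * Bᵀ = diagL (2 * k) k p.1} := by
  have : CompactSpace {B : Matrix (Fin (2 * k)) (Fin (2 * k)) ℝ | Bᵀ * B = 1} :=
    isCompact_iff_compactSpace.1 (isCompact_orthogonal _)
  set K := {B : Matrix (Fin (2 * k)) (Fin (2 * k)) ℝ | Bᵀ * B = 1}
  have hcl : IsClosed {q : ((Fin k → ℝ) × (Fin (k - 1) → ℝ)) × K |
      q.2.1 * Aeven k q.1.2 (fun i => (q.2.1ᵀ * diagL (2 * k) k q.1.1 * q.2.1)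
        ⟨i, by omega⟩ ⟨2 * k - 1, by omega⟩) * q.2.1ᵀ = diagL (2 * k) k q.1.1} := by
    have hD : Continuous fun q : ((Fin k → ℝ) × (Fin (k - 1) → ℝ)) × K =>
      diagL (2 * k) k q.1.1 := continuous_diagL _ _ (by fun_prop)
    have hB : Continuous fun q : ((Fin k → ℝ) × (Fin (k - 1) → ℝ)) × K => q.2.1 := by fun_prop
    refine isClosed_eq ((hB.matrix_mul (continuous_Aeven k (by fun_prop) ?_)).matrix_mul
      hB.matrix_transpose) hD
    exact continuous_pi fun i =>
      ((hB.matrix_transpose.matrix_mul hD).matrix_mul hB).matrix_elem _ _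
  convert isClosedMap_fst_of_compactSpace _ hcl using 1
  ext p
  constructor
  · rintro ⟨Y, B, hB, h⟩
    refine ⟨(p, ⟨B, hB⟩), ?_, rfl⟩
    have hA : Bᵀ * diagL (2 * k) k p.1 * B = Aeven k p.2 Y := by
      rw [← h]
      calc Bᵀ * (B * Aeven k p.2 Y * Bᵀ) * B = (Bᵀ * B) * Aeven k p.2 Y * (Bᵀ * B) := by
            simp only [Matrix.mul_assoc]
        _ = _ := by rw [hB, Matrix.one_mul, Matrix.mul_one]
    have hY : (fun i : Fin (2 * k - 1) =>
        Aeven k p.2 Y ⟨i, by omega⟩ ⟨2 * k - 1, by omega⟩) = Y := by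
      ext i
      simp [Aeven]
    simp only [Set.mem_ofPred_eq, hA, hY, h]
  · rintro ⟨⟨p, B, hB⟩, h, rfl⟩
    exact ⟨_, B, hB, h⟩

lemma abs_interlacing (k : ℕ) (hk : 2 ≤ k) (a : Fin k → ℝ) (b : Fin (k - 1) → ℝ)
    (h1 : ∀ (i : Fin k) (j : Fin (k - 1)), i.val = j.val → b j ≤ a i)
    (h2 : ∀ (i : Fin (k - 1)) (j : Fin k), j.val = i.val + 1 → j.val < k - 1 → a j ≤ b i)
    (h3 : ∀ (i : Fin (k - 1)) (j : Fin k), j.val = i.val + 1 → j.val = k - 1 → |a j| ≤ b i) :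
    (∀ i, 0 ≤ b i) ∧
    (∀ (i : Fin k) (j : Fin (k - 1)), i.val ≤ j.val → b j ≤ |a i|) ∧
    (∀ (i : Fin (k - 1)) (j : Fin k), i.val < j.val → |a j| ≤ b i) := by
  set β : ℕ → ℝ := fun i => if h : i < k - 1 then b ⟨i, h⟩ else 0 with hβ
  set α : ℕ → ℝ := fun i => if h : i < k - 1 then a ⟨i, by omega⟩ else
    if i = k - 1 then |a ⟨k - 1, Nat.sub_one_lt (by omega)⟩| else 0 with hα
  have hβα (i) : β i ≤ α i := by
    simp only [hβ, hα]
    split_ifs with h h'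
    exacts [h1 _ _ rfl, abs_nonneg _, le_rfl]
  have hαβ (i) : α (i + 1) ≤ β i := by
    simp only [hβ, hα]
    split_ifs with h h' h' h'' <;> try omega
    · exact h2 _ _ rfl h
    · exact h3 _ _ h'.symm rfl
    · exact le_rfl
  have hβanti : Antitone β := antitone_nat_of_succ_le fun i => (hβα _).trans (hαβ i)
  have hαanti : Antitone α := antitone_nat_of_succ_le fun i => (hαβ i).trans (hβα i)
  have hβ0 (i) : 0 ≤ β i := by
    have : β (i + k) = 0 := dif_neg (by omega)
    exact this ▸ hβanti (Nat.le_add_right i k)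
  have hbβ (i : Fin (k - 1)) : b i = β i := by simp [hβ]
  have haα (i : Fin k) : |a i| = α i := by
    by_cases hi : i.val < k - 1
    · have : α i = a i := by simp [hα, hi]
      rw [← this, abs_of_nonneg ((hβ0 i).trans (hβα i))]
    · have : i = ⟨k - 1, Nat.sub_one_lt (by omega)⟩ := Fin.ext (show i.val = k - 1 by omega)
      rw [this]
      simp [hα]
  refine ⟨fun i => hbβ i ▸ hβ0 i, fun i j hij => ?_, fun i j hij => ?_⟩
  · rw [hbβ, haα]
    exact (hβα j).trans (hαanti hij)
  · rw [hbβ, haα]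
    exact (hαanti (Nat.succ_le_of_lt hij)).trans (hαβ i)

/-- Lemma (openeven), existence part: under the interlacing chain
`a₁ ≥ b₁ ≥ a₂ ≥ b₂ ≥ … ≥ b_{k-1} ≥ |a_k|` there is `Y ∈ ℝ^{2k-1}` with
`A(b, Y)` SO(2k)-conjugate to `diag (L a₁, …, L a_k)`. -/
theorem statement3 (k : ℕ) (hk : 2 ≤ k) (a : Fin k → ℝ) (b : Fin (k-1) → ℝ)
    (h1 : ∀ i : ℕ, ∀ h : i < k - 1, a ⟨i, by omega⟩ ≥ b ⟨i, h⟩)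
    (h2 : ∀ i : ℕ, ∀ h : i + 1 < k - 1, b ⟨i, by omega⟩ ≥ a ⟨i + 1, by omega⟩)
    (h3 : b ⟨k - 2, by omega⟩ ≥ |a ⟨k - 1, by omega⟩|) :
    ∃ Y : Fin (2*k-1) → ℝ, SOConj (Aeven k b Y) (diagL (2*k) k a) := by
  obtain ⟨hb, hba, hab⟩ := abs_interlacing k hk a b
    (fun ⟨i, hi⟩ ⟨j, hj⟩ hij => by
      obtain rfl : i = j := hij
      exact h1 i hj)
    (fun ⟨i, hi⟩ ⟨j, hj⟩ hij hjk => by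
      obtain rfl : j = i + 1 := hij
      exact h2 i hjk)
    (fun ⟨i, hi⟩ ⟨j, hj⟩ hij hjk => by
      obtain rfl : j = k - 1 := hjk
      obtain rfl : i = k - 2 := by simp only at hij; omega
      exact h3)
  set σ : Fin k → ℝ := fun i => if 0 ≤ a i then 1 else -1 with hσ
  set F : ℝ → (Fin k → ℝ) × (Fin (k - 1) → ℝ) := fun ε =>
    (fun i => a i + 2 * ε * (k - i.val) * σ i, fun i => b i + ε * (2 * (k - i.val) - 1)) with hF
  have hF0 : F 0 = (a, b) := by simp [hF]
  have hFc : Continuous F := by fun_prop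
  have hlim : Filter.Tendsto F (nhdsWithin 0 (Set.Ioi 0)) (nhds (a, b)) :=
    hF0 ▸ hFc.continuousWithinAt
  obtain ⟨Y, B, hB, hC⟩ := (isClosed_setOf_orthogonal_conj k hk).mem_of_tendsto hlim <| by
    filter_upwards [self_mem_nhdsWithin] with ε (hε : 0 < ε)
    have hlt (i : Fin k) : (i.val : ℝ) + 1 ≤ k := by exact_mod_cast i.isLt
    have hpos (i : Fin k) : 0 < 2 * ε * (k - i.val) :=
      mul_pos (by positivity) (by linarith [hlt i])
    have habs (i : Fin k) : |(F ε).1 i| = |a i| + 2 * ε * (k - i.val) := by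
      have := hpos i
      simp only [hF, hσ]
      split_ifs with h
      · rw [mul_one, abs_of_nonneg h, abs_of_nonneg (by linarith)]
      · rw [abs_of_neg (not_le.1 h), abs_of_neg (by linarith)]
        ring
    refine exists_orthogonal_conj_of_strict k hk _ _ (fun i => ?_) (fun i => ?_)
      (fun i j hij => ?_) (fun i j hij => ?_)
    · rw [← abs_pos, habs]
      linarith [hpos i, abs_nonneg (a i)]
    · have : (i.val : ℝ) + 1 ≤ k := by exact_mod_cast (by omega : i.val + 1 ≤ k)
      exact add_nonneg (hb i) (mul_nonneg hε.le (by linarith))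
    · rw [habs]
      have : (i.val : ℝ) ≤ j.val := by exact_mod_cast hij
      simp only [hF]
      nlinarith [hba i j hij]
    · rw [habs]
      have : (i.val : ℝ) + 1 ≤ j.val := by exact_mod_cast hij
      simp only [hF]
      nlinarith [hab i j hij]
  exact exists_SOConj_of_orthogonal_conj hk hB hC
end

section
/- Let k ≥ 2 and let a_1,…,a_k and b_1,…,b_{k−1} be real numbers with a_1 ≥ a_2 ≥ … ≥ a_{k−1} ≥ |a_k| and b_1 ≥ b_2 ≥ … ≥ b_{k−1} ≥ 0. If there exists Y = (y_1,…,y_{2k−1}) ∈ ℝ^{2k−1} such that A(b,Y) is SO(2k)-conjugate to diag(L(a_1),…,L(a_k)), then the interlacing chain a_1 ≥ b_1 ≥ a_2 ≥ b_2 ≥ … ≥ b_{k−1} ≥ |a_k| holds. -/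
open Matrix Polynomial

/-- The index sharing a `2 × 2` diagonal block with `j`. -/
def blockPartner {k : ℕ} (j : Fin (2 * k)) : Fin (2 * k) :=
  ⟨if j.val % 2 = 0 then j.val + 1 else j.val - 1, by
    have := j.isLt
    split_ifs <;> omega⟩

lemma blockPartner_involutive {k : ℕ} :
    Function.Involutive (blockPartner : Fin (2 * k) → Fin (2 * k)) := by
  intro j
  apply Fin.ext
  simp only [blockPartner]
  split_ifs <;> omega

/-- The absolute values of a finite sequence, extended by zero. -/
noncomputable def absExtend {n : ℕ} (c : Fin n → ℝ) (i : ℕ) : ℝ :=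
  if h : i < n then |c ⟨i, h⟩| else 0

lemma absExtend_of_lt {n : ℕ} (c : Fin n → ℝ) {i : ℕ} (h : i < n) :
    absExtend c i = |c ⟨i, h⟩| := dif_pos h

lemma absExtend_nonneg {n : ℕ} (c : Fin n → ℝ) (i : ℕ) : 0 ≤ absExtend c i := by
  unfold absExtend
  split_ifs
  · exact abs_nonneg _
  · exact le_rfl

lemma absExtend_antitone {n : ℕ} (c : Fin n → ℝ)
    (h : ∀ i : ℕ, ∀ hi : i + 1 < n, |c ⟨i + 1, hi⟩| ≤ |c ⟨i, by omega⟩|) :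
    Antitone (absExtend c) := by
  refine antitone_nat_of_succ_le fun i => ?_
  by_cases hi : i + 1 < n
  · rw [absExtend_of_lt c hi, absExtend_of_lt c (by omega)]
    exact h i hi
  · rw [absExtend, dif_neg hi]
    exact absExtend_nonneg c i

lemma diagL_mulVec_sq {k n : ℕ} (c : Fin n → ℝ) (w : Fin (2 * k) → ℝ) (j : Fin (2 * k)) :
    ((diagL (2 * k) n c *ᵥ w) j) ^ 2 =
      absExtend c ((blockPartner j).val / 2) ^ 2 * w (blockPartner j) ^ 2 := by
  have hdiv : (blockPartner j).val / 2 = j.val / 2 := by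
    simp only [blockPartner]
    split_ifs <;> omega
  rw [hdiv, Matrix.mulVec, dotProduct, Finset.sum_eq_single (blockPartner j)]
  · rw [mul_pow]
    congr 1
    by_cases hn : j.val / 2 < n
    · rw [absExtend_of_lt c hn, sq_abs]
      simp only [diagL, Matrix.of_apply]
      rw [dif_pos ⟨hdiv.symm, hn⟩]
      rcases Nat.mod_two_eq_zero_or_one j.val with h | h
      · have hp : (blockPartner j).val % 2 = 1 := by
          simp only [blockPartner]
          split_ifs
          omega
        rw [if_pos ⟨h, hp⟩, neg_sq]
      · have hp : (blockPartner j).val % 2 = 0 := by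
          simp only [blockPartner]
          split_ifs <;> omega
        rw [if_neg (by omega), if_pos ⟨h, hp⟩]
    · simp [diagL, absExtend, hn]
  · intro l _ hl
    have hl' : l.val ≠ (blockPartner j).val := fun h => hl (Fin.ext h)
    simp only [blockPartner] at hl'
    simp only [diagL, Matrix.of_apply]
    have h1 : ¬ ((j.val / 2 = l.val / 2 ∧ j.val / 2 < n) ∧ j.val % 2 = 0 ∧ l.val % 2 = 1) := by
      split_ifs at hl' <;> omega
    have h2 : ¬ ((j.val / 2 = l.val / 2 ∧ j.val / 2 < n) ∧ j.val % 2 = 1 ∧ l.val % 2 = 0) := by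
      split_ifs at hl' <;> omega
    split_ifs <;> first | exact zero_mul _ | (exfalso; tauto)
  · simp

lemma sum_diagL_mulVec_sq {k n : ℕ} (c : Fin n → ℝ) (w : Fin (2 * k) → ℝ) :
    ∑ j, ((diagL (2 * k) n c *ᵥ w) j) ^ 2 =
      ∑ j : Fin (2 * k), absExtend c (j.val / 2) ^ 2 * w j ^ 2 := by
  simp only [diagL_mulVec_sq]
  exact Equiv.sum_comp blockPartner_involutive.toPerm
    fun j : Fin (2 * k) => absExtend c (j.val / 2) ^ 2 * w j ^ 2

lemma sum_Aeven_mulVec_sq {k : ℕ} (hk : 1 ≤ k) (b : Fin (k - 1) → ℝ) (Y : Fin (2 * k - 1) → ℝ)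
    (u : Fin (2 * k) → ℝ) (hu : u ⟨2 * k - 1, by omega⟩ = 0) :
    ∑ j, ((Aeven k b Y *ᵥ u) j) ^ 2 =
      ∑ j : Fin (2 * k), absExtend b (j.val / 2) ^ 2 * u j ^ 2 +
        ((Aeven k b Y *ᵥ u) ⟨2 * k - 1, by omega⟩) ^ 2 := by
  have hlast : ∀ j : Fin (2 * k), ¬ j.val < 2 * k - 1 → j = ⟨2 * k - 1, by omega⟩ := by
    intro j hj
    apply Fin.ext
    have := j.isLt
    simp only
    omega
  have hD : (diagL (2 * k) (k - 1) b *ᵥ u) ⟨2 * k - 1, by omega⟩ = 0 := by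
    rw [Matrix.mulVec, dotProduct]
    refine Finset.sum_eq_zero fun l _ => ?_
    have : ¬ (2 * k - 1) / 2 < k - 1 := by omega
    simp [diagL, this]
  have hj : ∀ j : Fin (2 * k), j ≠ ⟨2 * k - 1, by omega⟩ →
      (Aeven k b Y *ᵥ u) j = (diagL (2 * k) (k - 1) b *ᵥ u) j := by
    intro j hj
    have hj' : j.val < 2 * k - 1 := by
      by_contra h
      exact hj (hlast j h)
    rw [Matrix.mulVec, Matrix.mulVec, dotProduct, dotProduct]
    refine Finset.sum_congr rfl fun l _ => ?_
    by_cases hl : l.val < 2 * k - 1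
    · simp [Aeven, hj', hl, diagL]
    · rw [hlast l hl, hu, mul_zero, mul_zero]
  rw [← sum_diagL_mulVec_sq,
    ← Finset.add_sum_erase Finset.univ _ (Finset.mem_univ (⟨2 * k - 1, by omega⟩ : Fin (2 * k))),
    ← Finset.add_sum_erase Finset.univ (fun j => ((diagL (2 * k) (k - 1) b *ᵥ u) j) ^ 2)
      (Finset.mem_univ (⟨2 * k - 1, by omega⟩ : Fin (2 * k))), hD,
    Finset.sum_congr rfl fun j h => by rw [hj j (Finset.ne_of_mem_erase h)]]
  ring

lemma sum_sq_mulVec_of_orthogonal {m : ℕ} {B : Matrix (Fin m) (Fin m) ℝ} (hB : Bᵀ * B = 1)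
    (u : Fin m → ℝ) : ∑ j, ((B *ᵥ u) j) ^ 2 = ∑ j, u j ^ 2 := by
  have h : (B *ᵥ u) ⬝ᵥ (B *ᵥ u) = u ⬝ᵥ u := by
    rw [Matrix.dotProduct_mulVec, ← Matrix.mulVec_transpose, Matrix.mulVec_mulVec, hB,
      Matrix.one_mulVec]
  simpa only [dotProduct, ← sq] using h

lemma exists_mulVec_eq_zero_of_row_eq_zero {m : ℕ} (M : Matrix (Fin m) (Fin m) ℝ) (i : Fin m)
    (h : ∀ j, M i j = 0) : ∃ u ≠ 0, M *ᵥ u = 0 :=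
  Matrix.exists_mulVec_eq_zero_iff.mpr (Matrix.det_eq_zero_of_row_eq_zero i h)

lemma sum_sq_pos_of_ne_zero {m : ℕ} {u : Fin m → ℝ} (hu : u ≠ 0) : 0 < ∑ j, u j ^ 2 := by
  obtain ⟨i, hi⟩ := Function.ne_iff.mp hu
  exact Finset.sum_pos' (fun j _ => sq_nonneg _) ⟨i, Finset.mem_univ i, by
    have : u i ≠ 0 := hi
    positivity⟩

lemma sum_sq_mul_sq_le {m : ℕ} (f : ℕ → ℝ) (hf : ∀ i, 0 ≤ f i) (r : ℝ) (w : Fin m → ℝ)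
    (h : ∀ j : Fin m, w j = 0 ∨ f (j.val / 2) ≤ r) :
    ∑ j : Fin m, f (j.val / 2) ^ 2 * w j ^ 2 ≤ r ^ 2 * ∑ j, w j ^ 2 := by
  rw [Finset.mul_sum]
  refine Finset.sum_le_sum fun j _ => ?_
  rcases h j with h | h
  · simp [h]
  · have := hf (j.val / 2)
    gcongr

lemma le_sum_sq_mul_sq {m : ℕ} (f : ℕ → ℝ) {r : ℝ} (hr : 0 ≤ r) (w : Fin m → ℝ)
    (h : ∀ j : Fin m, w j = 0 ∨ r ≤ f (j.val / 2)) :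
    r ^ 2 * ∑ j, w j ^ 2 ≤ ∑ j : Fin m, f (j.val / 2) ^ 2 * w j ^ 2 := by
  rw [Finset.mul_sum]
  refine Finset.sum_le_sum fun j _ => ?_
  rcases h j with h | h
  · simp [h]
  · gcongr

section Interlacing

variable {k : ℕ} {a : Fin k → ℝ} {b : Fin (k - 1) → ℝ} {Y : Fin (2 * k - 1) → ℝ}
  {B : Matrix (Fin (2 * k)) (Fin (2 * k)) ℝ}

lemma sum_absExtend_sq_eq (hk : 1 ≤ k) (hB : Bᵀ * B = 1)
    (hBA : B * Aeven k b Y = diagL (2 * k) k a * B) (u : Fin (2 * k) → ℝ)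
    (hu : u ⟨2 * k - 1, by omega⟩ = 0) :
    ∑ j : Fin (2 * k), absExtend a (j.val / 2) ^ 2 * (B *ᵥ u) j ^ 2 =
      ∑ j : Fin (2 * k), absExtend b (j.val / 2) ^ 2 * u j ^ 2 +
        ((Aeven k b Y *ᵥ u) ⟨2 * k - 1, by omega⟩) ^ 2 := by
  rw [← sum_diagL_mulVec_sq, Matrix.mulVec_mulVec, ← hBA, ← Matrix.mulVec_mulVec,
    sum_sq_mulVec_of_orthogonal hB, sum_Aeven_mulVec_sq hk b Y u hu]

lemma absExtend_le_of_orthogonal (ha : Antitone (absExtend a)) (hb : Antitone (absExtend b))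
    (hB : Bᵀ * B = 1) (hBA : B * Aeven k b Y = diagL (2 * k) k a * B)
    {i : ℕ} (hi : i < k - 1) : absExtend b i ≤ absExtend a i := by
  let M : Matrix (Fin (2 * k)) (Fin (2 * k)) ℝ := Matrix.of fun j =>
    if j.val < 2 * i then B j else if 2 * i + 2 ≤ j.val then Pi.single j 1 else 0
  obtain ⟨u, hu0, hu⟩ := exists_mulVec_eq_zero_of_row_eq_zero M ⟨2 * i, by omega⟩
    (fun j => by simp [M])
  have h1 : ∀ j : Fin (2 * k), j.val < 2 * i → (B *ᵥ u) j = 0 := by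
    intro j hj
    have h := congrFun hu j
    simpa [M, Matrix.mulVec, hj] using h
  have h2 : ∀ j : Fin (2 * k), 2 * i + 2 ≤ j.val → u j = 0 := by
    intro j hj
    have h := congrFun hu j
    have hj' : ¬ j.val < 2 * i := by omega
    simpa [M, Matrix.mulVec, hj, hj'] using h
  have hpos := sum_sq_pos_of_ne_zero hu0
  have heq := sum_absExtend_sq_eq (by omega) hB hBA u (h2 _ (by simp only; omega))
  have hup := sum_sq_mul_sq_le (absExtend a) (absExtend_nonneg a) (absExtend a i) (B *ᵥ u)
    fun j => (lt_or_ge j.val (2 * i)).imp (h1 j) fun h => ha (by omega)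
  have hlo := le_sum_sq_mul_sq (absExtend b) (absExtend_nonneg b i) u
    fun j => (le_or_gt (2 * i + 2) j.val).imp (h2 j) fun h => hb (by omega)
  rw [sum_sq_mulVec_of_orthogonal hB] at hup
  refine (sq_le_sq₀ (absExtend_nonneg _ _) (absExtend_nonneg a i)).mp ?_
  refine le_of_mul_le_mul_right ?_ hpos
  linarith [sq_nonneg ((Aeven k b Y *ᵥ u) ⟨2 * k - 1, by omega⟩)]

lemma absExtend_succ_le_of_orthogonal (ha : Antitone (absExtend a))
    (hb : Antitone (absExtend b))
    (hB : Bᵀ * B = 1) (hBA : B * Aeven k b Y = diagL (2 * k) k a * B)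
    {i : ℕ} (hi : i < k - 1) : absExtend a (i + 1) ≤ absExtend b i := by
  let last : Fin (2 * k) := ⟨2 * k - 1, by omega⟩
  let M : Matrix (Fin (2 * k)) (Fin (2 * k)) ℝ := Matrix.of fun j =>
    if j.val < 2 * i then Pi.single j 1
    else if j.val = 2 * i then Pi.single last 1
    else if j.val = 2 * i + 1 then Aeven k b Y last
    else if 2 * i + 4 ≤ j.val then B j else 0
  obtain ⟨u, hu0, hu⟩ := exists_mulVec_eq_zero_of_row_eq_zero M ⟨2 * i + 2, by omega⟩
    (fun j => by simp [M])
  have h1 : ∀ j : Fin (2 * k), j.val < 2 * i → u j = 0 := by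
    intro j hj
    have h := congrFun hu j
    simpa [M, Matrix.mulVec, hj] using h
  have h2 : u last = 0 := by
    have h := congrFun hu ⟨2 * i, by omega⟩
    simpa [M, Matrix.mulVec] using h
  have h3 : (Aeven k b Y *ᵥ u) last = 0 := by
    have h := congrFun hu ⟨2 * i + 1, by omega⟩
    simpa [M, Matrix.mulVec] using h
  have h4 : ∀ j : Fin (2 * k), 2 * i + 4 ≤ j.val → (B *ᵥ u) j = 0 := by
    intro j hj
    have h := congrFun hu j
    have e1 : ¬ j.val < 2 * i := by omega
    have e2 : ¬ j.val = 2 * i := by omega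
    have e3 : ¬ j.val = 2 * i + 1 := by omega
    simpa [M, Matrix.mulVec, hj, e1, e2, e3] using h
  have hpos := sum_sq_pos_of_ne_zero hu0
  have heq := sum_absExtend_sq_eq (by omega) hB hBA u h2
  rw [h3] at heq
  have hup := sum_sq_mul_sq_le (absExtend b) (absExtend_nonneg b) (absExtend b i) u
    fun j => (lt_or_ge j.val (2 * i)).imp (h1 j) fun h => hb (by omega)
  have hlo := le_sum_sq_mul_sq (absExtend a) (absExtend_nonneg a (i + 1)) (B *ᵥ u)
    fun j => (le_or_gt (2 * i + 4) j.val).imp (h4 j) fun h => ha (by omega)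
  rw [sum_sq_mulVec_of_orthogonal hB] at hlo
  refine (sq_le_sq₀ (absExtend_nonneg _ _) (absExtend_nonneg b i)).mp ?_
  refine le_of_mul_le_mul_right ?_ hpos
  linarith

end Interlacing

/-- Lemma (openeven), necessity part: if `a₁ ≥ … ≥ a_{k-1} ≥ |a_k|`,
`b₁ ≥ … ≥ b_{k-1} ≥ 0`, and some `Y` makes `A(b, Y)` SO(2k)-conjugate to
`diag (L a₁, …, L a_k)`, then the interlacing chain
`a₁ ≥ b₁ ≥ a₂ ≥ b₂ ≥ … ≥ b_{k-1} ≥ |a_k|` holds. -/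
theorem statement4 (k : ℕ) (hk : 2 ≤ k) (a : Fin k → ℝ) (b : Fin (k-1) → ℝ)
    (ha1 : ∀ i : ℕ, ∀ h : i + 2 < k, a ⟨i, by omega⟩ ≥ a ⟨i + 1, by omega⟩)
    (ha2 : a ⟨k - 2, by omega⟩ ≥ |a ⟨k - 1, by omega⟩|)
    (hb1 : ∀ i : ℕ, ∀ h : i + 1 < k - 1, b ⟨i, by omega⟩ ≥ b ⟨i + 1, h⟩)
    (hb2 : b ⟨k - 2, by omega⟩ ≥ 0)
    (hY : ∃ Y : Fin (2*k-1) → ℝ, SOConj (Aeven k b Y) (diagL (2*k) k a)) :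
    (∀ i : ℕ, ∀ h : i < k - 1, a ⟨i, by omega⟩ ≥ b ⟨i, h⟩) ∧
    (∀ i : ℕ, ∀ h : i + 1 < k - 1, b ⟨i, by omega⟩ ≥ a ⟨i + 1, by omega⟩) ∧
    b ⟨k - 2, by omega⟩ ≥ |a ⟨k - 1, by omega⟩| := by
  obtain ⟨Y, B, hB, -, hconj⟩ := hY
  have hBA : B * Aeven k b Y = diagL (2 * k) k a * B := by
    rw [← hconj, Matrix.mul_assoc, Matrix.inv_eq_left_inv hB, hB, Matrix.mul_one]
  have ha_abs : ∀ d i : ℕ, ∀ h : i + d + 2 = k, |a ⟨k - 1, by omega⟩| ≤ a ⟨i, by omega⟩ := by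
    intro d
    induction d with
    | zero =>
      intro i h
      obtain rfl : i = k - 2 := by omega
      exact ha2
    | succ d ih =>
      intro i h
      exact (ih (i + 1) (by omega)).trans (ha1 i (by omega))
  have ha_nonneg : ∀ i : ℕ, ∀ h : i < k - 1, 0 ≤ a ⟨i, by omega⟩ := fun i h =>
    (abs_nonneg _).trans (ha_abs (k - 2 - i) i (by omega))
  have hb_nonneg : ∀ d i : ℕ, ∀ h : i + d + 2 = k, 0 ≤ b ⟨i, by omega⟩ := by
    intro d
    induction d with
    | zero =>
      intro i h
      obtain rfl : i = k - 2 := by omega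
      exact hb2
    | succ d ih =>
      intro i h
      exact (ih (i + 1) (by omega)).trans (hb1 i (by omega))
  have ha_ext : ∀ i : ℕ, ∀ h : i < k - 1, absExtend a i = a ⟨i, by omega⟩ := fun i h => by
    rw [absExtend_of_lt a (by omega), abs_of_nonneg (ha_nonneg i h)]
  have hb_ext : ∀ i : ℕ, ∀ h : i < k - 1, absExtend b i = b ⟨i, h⟩ := fun i h => by
    rw [absExtend_of_lt b h, abs_of_nonneg (hb_nonneg (k - 2 - i) i (by omega))]
  have ha : Antitone (absExtend a) := by
    refine absExtend_antitone a fun i hi => ?_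
    rw [abs_of_nonneg (ha_nonneg i (by omega))]
    rcases Nat.lt_or_ge (i + 2) k with h | h
    · rw [abs_of_nonneg (ha_nonneg (i + 1) (by omega))]
      exact ha1 i h
    · obtain rfl : k = i + 2 := by omega
      exact ha2
  have hb : Antitone (absExtend b) := by
    refine absExtend_antitone b fun i hi => ?_
    rw [← absExtend_of_lt b hi, ← absExtend_of_lt b (by omega), hb_ext i (by omega),
      hb_ext (i + 1) hi]
    exact hb1 i hi
  refine ⟨fun i h => ?_, fun i h => ?_, ?_⟩
  · rw [← ha_ext i h, ← hb_ext i h]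
    exact absExtend_le_of_orthogonal ha hb hB hBA h
  · rw [← ha_ext (i + 1) h, ← hb_ext i (by omega)]
    exact absExtend_succ_le_of_orthogonal ha hb hB hBA (by omega)
  · have h := absExtend_succ_le_of_orthogonal ha hb hB hBA (show k - 2 < k - 1 by omega)
    rw [show k - 2 + 1 = k - 1 by omega, hb_ext (k - 2) (by omega),
      absExtend_of_lt a (by omega)] at h
    exact h
end
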